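/- Let γ ∈ (0,1), let a, b ∈ ℝ, and let W^M and W^Z be two Weyl-type tensors. Then there exists a family of functions w_{ij} : ℝ⁴ \ {0} → ℝ (for i, j ∈ Fin 4), each smooth on ℝ⁴ \ {0} and symmetric (w_{ij} = w_{ji}), such that: (i) Δ²w_{ij} = 0 on the open annulus {x : γ < |x| < 1}; (ii) for every x with |x| = γ: w_{ij}(x) = δ_{ij} − (a²/3)·∑_{k,l} W^M k i j l · x_k x_l / |x|⁴ and ∂_r w_{ij}(x) = (2a²/3)·∑_{k,l} W^M k i j l · x_k x_l / |x|⁵; (iii) for every x with |x| = 1: w_{ij}(x) = δ_{ij} − (b²/3)·∑_{k,l} W^Z k i j l · x_k x_l and ∂_r w_{ij}(x) = −(2b²/3)·∑_{k,l} W^Z k i j l · x_k x_l / |x|. Here ∂_r u(x) := (x/|x|) · ∇u(x) denotes the radial derivative and Δ² is the Euclidean bilaplacian on ℝ⁴. -/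

import Mathlib

/-!
Write `H_{ij}(x) = ∑ W_{kijl} x_k x_l`. Trace-freeness of `W` makes `H_{ij}` a harmonic quadratic
form, so on `ℝ⁴ \ {0}`, with `s = |x|²`,
`Δ (H f(s)) = H (4 s f''(s) + 16 f'(s))` (`HasLap.quad`). Hence `H f(s)` is biharmonic for
`f` in the span of `1, s, s⁻², s⁻³` (`lap_lap_quad`). The function `w_{ij}` is sought as
`δ_{ij} + H^M_{ij} f(s) + H^Z_{ij} g(s)` with `f, g` in this span, and the boundary conditions
become prescribed values of `f, f', g, g'` at `s = γ²` and `s = 1`. This Hermite problem is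
solvable (`exists_profile`): after multiplying by `s³` the profile is a quartic polynomial
without `s²`-term, and the cubic Hermite interpolant can be corrected by a multiple of
`(s - 1)² (s - t)²`, whose `s²`-coefficient `1 + 4 t + t²` does not vanish for `t > 0`.
-/

/-- A Weyl-type tensor: a `(0,4)`-tensor on `ℝ⁴` with the algebraic symmetries of the Weyl
curvature tensor and all traces vanishing. -/
def IsWeyl (W : Fin 4 → Fin 4 → Fin 4 → Fin 4 → ℝ) : Prop :=
  (∀ k i j l, W k i j l = -(W i k j l)) ∧
  (∀ k i j l, W k i j l = -(W k i l j)) ∧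
  (∀ k i j l, W k i j l = W j l k i) ∧
  (∀ i j, ∑ a, W a i j a = 0)

/-- The `i`-th partial derivative of a function on `ℝ⁴`. -/
noncomputable def pd (i : Fin 4) (f : EuclideanSpace ℝ (Fin 4) → ℝ)
    (x : EuclideanSpace ℝ (Fin 4)) : ℝ :=
  fderiv ℝ f x (EuclideanSpace.single i 1)

/-- The Euclidean Laplacian on `ℝ⁴`: sum of second partial derivatives. -/
noncomputable def lap (f : EuclideanSpace ℝ (Fin 4) → ℝ)
    (x : EuclideanSpace ℝ (Fin 4)) : ℝ :=
  ∑ α, pd α (pd α f) x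

/-- The radial derivative `∂_r u(x) = (x/|x|) · ∇u(x)`. -/
noncomputable def radDeriv (u : EuclideanSpace ℝ (Fin 4) → ℝ)
    (x : EuclideanSpace ℝ (Fin 4)) : ℝ :=
  fderiv ℝ u x (‖x‖⁻¹ • x)

/-! ### Quadratic forms times radial functions -/

/-- The quadratic form `∑ B_{kl} x_k x_l`. -/
def quad (B : Fin 4 → Fin 4 → ℝ) (x : EuclideanSpace ℝ (Fin 4)) : ℝ :=
  ∑ k, ∑ l, B k l * x k * x l

/-- The differential of `quad B` at `x`. -/
noncomputable def quadD (B : Fin 4 → Fin 4 → ℝ) (x : EuclideanSpace ℝ (Fin 4)) :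
    EuclideanSpace ℝ (Fin 4) →L[ℝ] ℝ :=
  ∑ k, ∑ l, ((B k l * x k) • EuclideanSpace.proj (𝕜 := ℝ) l
    + x l • (B k l • EuclideanSpace.proj (𝕜 := ℝ) k))

theorem hasFDerivAt_coord (k : Fin 4) (x : EuclideanSpace ℝ (Fin 4)) :
    HasFDerivAt (fun y : EuclideanSpace ℝ (Fin 4) => y k) (EuclideanSpace.proj (𝕜 := ℝ) k) x :=
  (EuclideanSpace.proj (𝕜 := ℝ) k : EuclideanSpace ℝ (Fin 4) →L[ℝ] ℝ).hasFDerivAt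

theorem quad_hasFDerivAt (B : Fin 4 → Fin 4 → ℝ) (x : EuclideanSpace ℝ (Fin 4)) :
    HasFDerivAt (quad B) (quadD B x) x := by
  unfold quad quadD
  refine HasFDerivAt.fun_sum fun k _ => HasFDerivAt.fun_sum fun l _ => ?_
  exact ((hasFDerivAt_coord k x).const_mul (B k l)).mul (hasFDerivAt_coord l x)

theorem quadD_self (B : Fin 4 → Fin 4 → ℝ) (x : EuclideanSpace ℝ (Fin 4)) :
    quadD B x x = 2 * quad B x := by
  simp only [quadD, quad, sum_apply, add_apply,
    smul_apply, PiLp.proj_apply, smul_eq_mul, Finset.mul_sum]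
  refine Finset.sum_congr rfl fun k _ => Finset.sum_congr rfl fun l _ => ?_
  ring

theorem quadD_single (B : Fin 4 → Fin 4 → ℝ) (x : EuclideanSpace ℝ (Fin 4)) (α : Fin 4) :
    quadD B x (EuclideanSpace.single α 1) = ∑ k, (B α k + B k α) * x k := by
  simp only [quadD, sum_apply, add_apply,
    smul_apply, PiLp.proj_apply, smul_eq_mul]
  fin_cases α <;> simp [Fin.sum_univ_four] <;> ring

/-- Chain and product rule for a quadratic form times a function of `s = |x|²`. -/
theorem quad_mul_hasFDerivAt (B : Fin 4 → Fin 4 → ℝ) {f : ℝ → ℝ} {f' : ℝ}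
    {x : EuclideanSpace ℝ (Fin 4)} (hf : HasDerivAt f f' (‖x‖ ^ 2)) :
    HasFDerivAt (fun y => quad B y * f (‖y‖ ^ 2))
      (quad B x • (f' • (2 • innerSL ℝ x)) + f (‖x‖ ^ 2) • quadD B x) x :=
  (quad_hasFDerivAt B x).mul
    (hf.comp_hasFDerivAt x (hasStrictFDerivAt_norm_sq x).hasFDerivAt)

theorem radDeriv_eq (B C : Fin 4 → Fin 4 → ℝ) (d : ℝ) {f g : ℝ → ℝ} {f' g' : ℝ}
    {x : EuclideanSpace ℝ (Fin 4)} (hf : HasDerivAt f f' (‖x‖ ^ 2))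
    (hg : HasDerivAt g g' (‖x‖ ^ 2)) :
    radDeriv (fun y => d + quad B y * f (‖y‖ ^ 2) + quad C y * g (‖y‖ ^ 2)) x
      = ‖x‖⁻¹ * (2 * quad B x * (f (‖x‖ ^ 2) + ‖x‖ ^ 2 * f')
        + 2 * quad C x * (g (‖x‖ ^ 2) + ‖x‖ ^ 2 * g')) := by
  have h := ((quad_mul_hasFDerivAt B hf).const_add d).add (quad_mul_hasFDerivAt C hg)
  unfold radDeriv
  erw [h.fderiv]
  simp only [map_smul, add_apply, smul_apply,
    innerSL_apply_apply, real_inner_self_eq_norm_sq, quadD_self, smul_eq_mul, nsmul_eq_mul]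
  push_cast
  ring

theorem pd_quad_mul (B : Fin 4 → Fin 4 → ℝ) {f : ℝ → ℝ} {f' : ℝ}
    {x : EuclideanSpace ℝ (Fin 4)} (hf : HasDerivAt f f' (‖x‖ ^ 2)) (α : Fin 4) :
    pd α (fun y => quad B y * f (‖y‖ ^ 2)) x
      = f (‖x‖ ^ 2) * (∑ k, (B α k + B k α) * x k) + 2 * (quad B x * f') * x α := by
  unfold pd
  rw [(quad_mul_hasFDerivAt B hf).fderiv]
  simp only [add_apply, smul_apply,
    innerSL_apply_apply, quadD_single, smul_eq_mul, nsmul_eq_mul]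
  simp [EuclideanSpace.inner_single_right]
  ring

/-! ### Laplacians on the punctured space -/

theorem pd_congr {u v : EuclideanSpace ℝ (Fin 4) → ℝ}
    (h : ∀ x, x ≠ 0 → u x = v x) (α : Fin 4) {x : EuclideanSpace ℝ (Fin 4)} (hx : x ≠ 0) :
    pd α u x = pd α v x := by
  have : u =ᶠ[nhds x] v := by
    filter_upwards [isOpen_ne.mem_nhds hx] with y hy using h y hy
  unfold pd
  rw [this.fderiv_eq]

theorem lap_congr {u v : EuclideanSpace ℝ (Fin 4) → ℝ}
    (h : ∀ x, x ≠ 0 → u x = v x) {x : EuclideanSpace ℝ (Fin 4)} (hx : x ≠ 0) :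
    lap u x = lap v x :=
  Finset.sum_congr rfl fun α _ => pd_congr (fun _ hy => pd_congr h α hy) α hx

/-- On `ℝ⁴ \ {0}` the function `u` is twice differentiable along the coordinate directions, in the
sense that `u` and its partial derivatives are differentiable, and its Laplacian is `v`. -/
def HasLap (u v : EuclideanSpace ℝ (Fin 4) → ℝ) : Prop :=
  ∀ x, x ≠ 0 → DifferentiableAt ℝ u x ∧ (∀ α, DifferentiableAt ℝ (pd α u) x) ∧ lap u x = v x

theorem pd_add {u v : EuclideanSpace ℝ (Fin 4) → ℝ} {x : EuclideanSpace ℝ (Fin 4)}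
    (hu : DifferentiableAt ℝ u x) (hv : DifferentiableAt ℝ v x) (α : Fin 4) :
    pd α (fun y => u y + v y) x = pd α u x + pd α v x := by
  unfold pd
  rw [fderiv_fun_add hu hv]
  rfl

theorem HasLap.add {u₁ v₁ u₂ v₂ : EuclideanSpace ℝ (Fin 4) → ℝ}
    (h₁ : HasLap u₁ v₁) (h₂ : HasLap u₂ v₂) :
    HasLap (fun x => u₁ x + u₂ x) (fun x => v₁ x + v₂ x) := by
  have key : ∀ α x, x ≠ 0 → pd α (fun x => u₁ x + u₂ x) x = pd α u₁ x + pd α u₂ x :=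
    fun α x hx => pd_add (h₁ x hx).1 (h₂ x hx).1 α
  intro x hx
  refine ⟨(h₁ x hx).1.fun_add (h₂ x hx).1, fun α => ?_, ?_⟩
  · refine (((h₁ x hx).2.1 α).fun_add ((h₂ x hx).2.1 α)).congr_of_eventuallyEq ?_
    filter_upwards [isOpen_ne.mem_nhds hx] with y hy using key α y hy
  · beta_reduce
    rw [← (h₁ x hx).2.2, ← (h₂ x hx).2.2]
    unfold lap
    rw [← Finset.sum_add_distrib]
    refine Finset.sum_congr rfl fun α _ => ?_
    rw [pd_congr (key α) α hx]
    exact pd_add ((h₁ x hx).2.1 α) ((h₂ x hx).2.1 α) α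

theorem HasLap.const (d : ℝ) : HasLap (fun _ => d) (fun _ => 0) := by
  have h : ∀ α, pd α (fun _ : EuclideanSpace ℝ (Fin 4) => d) = fun _ => 0 := by
    intro α; funext x; simp [pd]
  have h0 : ∀ α, pd α (fun _ : EuclideanSpace ℝ (Fin 4) => (0 : ℝ)) = fun _ => 0 := by
    intro α; funext x; simp [pd]
  intro x _
  refine ⟨differentiableAt_const _, fun α => ?_, ?_⟩
  · rw [h]; exact differentiableAt_const _
  · simp [lap, h, h0]

/-- `Δ (H f(s)) = H (4 s f'' + 16 f')` for a trace-free quadratic form `H` on `ℝ⁴`. -/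
theorem HasLap.quad (B : Fin 4 → Fin 4 → ℝ) (hB : ∑ k, B k k = 0) {f f' f'' : ℝ → ℝ}
    (hf : ∀ s, 0 < s → HasDerivAt f (f' s) s) (hf' : ∀ s, 0 < s → HasDerivAt f' (f'' s) s) :
    HasLap (fun x => quad B x * f (‖x‖ ^ 2))
      (fun x => quad B x * (4 * ‖x‖ ^ 2 * f'' (‖x‖ ^ 2) + 16 * f' (‖x‖ ^ 2))) := by
  have hpos : ∀ x : EuclideanSpace ℝ (Fin 4), x ≠ 0 → 0 < ‖x‖ ^ 2 := fun x hx => by positivity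
  have key : ∀ α x, x ≠ 0 → pd α (fun x => _root_.quad B x * f (‖x‖ ^ 2)) x
      = f (‖x‖ ^ 2) * (∑ k, (B α k + B k α) * x k)
        + 2 * (_root_.quad B x * f' (‖x‖ ^ 2)) * x α :=
    fun α x hx => pd_quad_mul B (hf _ (hpos x hx)) α
  have hD : ∀ α x, x ≠ 0 → HasFDerivAt (fun x : EuclideanSpace ℝ (Fin 4) =>
      f (‖x‖ ^ 2) * (∑ k, (B α k + B k α) * x k) + 2 * (_root_.quad B x * f' (‖x‖ ^ 2)) * x α) _ x :=
    fun α x hx =>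
      (((hf _ (hpos x hx)).comp_hasFDerivAt x (hasStrictFDerivAt_norm_sq x).hasFDerivAt).mul
        (HasFDerivAt.fun_sum (u := Finset.univ) fun k _ =>
          (hasFDerivAt_coord k x).const_mul (B α k + B k α))).add
      (((quad_mul_hasFDerivAt B (hf' _ (hpos x hx))).const_mul 2).mul (hasFDerivAt_coord α x))
  intro x hx
  refine ⟨(quad_mul_hasFDerivAt B (hf _ (hpos x hx))).differentiableAt, fun α => ?_, ?_⟩
  · refine (hD α x hx).differentiableAt.congr_of_eventuallyEq ?_
    filter_upwards [isOpen_ne.mem_nhds hx] with y hy using key α y hy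
  · have h2 : ∀ α, pd α (pd α (fun x => _root_.quad B x * f (‖x‖ ^ 2))) x
        = f (‖x‖ ^ 2) * (2 * B α α)
          + 4 * x α * f' (‖x‖ ^ 2) * (∑ k, (B α k + B k α) * x k)
          + 2 * _root_.quad B x * f' (‖x‖ ^ 2)
          + 4 * _root_.quad B x * f'' (‖x‖ ^ 2) * x α ^ 2 := by
      intro α
      rw [pd_congr (key α) α hx]
      unfold pd
      rw [(hD α x hx).fderiv]
      simp only [add_apply, smul_apply,
        sum_apply, Function.comp,
        innerSL_apply_apply, quadD_single, smul_eq_mul, nsmul_eq_mul, PiLp.proj_apply,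
        EuclideanSpace.inner_single_right]
      have e : ∑ k, (B α k + B k α) * (EuclideanSpace.single α (1 : ℝ) : EuclideanSpace ℝ (Fin 4)) k
          = 2 * B α α := by
        simp [two_mul]
      rw [e]
      simp
      ring
    have hn : ‖x‖ ^ 2 = ∑ α, x α ^ 2 := by
      simp [EuclideanSpace.norm_sq_eq]
    have hL : ∑ α, x α * (∑ k, (B α k + B k α) * x k) = 2 * _root_.quad B x := by
      simp only [_root_.quad, Fin.sum_univ_four]
      ring
    unfold lap
    simp only [h2, Finset.sum_add_distrib, ← Finset.mul_sum, hB]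
    rw [← hn]
    have hL' : ∑ α, 4 * x α * f' (‖x‖ ^ 2) * (∑ k, (B α k + B k α) * x k)
        = 4 * f' (‖x‖ ^ 2) * (2 * _root_.quad B x) := by
      rw [← hL, Finset.mul_sum]
      exact Finset.sum_congr rfl fun α _ => by ring
    rw [hL']
    simp
    ring

/-! ### Biharmonic radial profiles -/

/-- The general radial profile for which `H f(|x|²)` is biharmonic. -/
noncomputable def profile (c : Fin 4 → ℝ) (s : ℝ) : ℝ :=
  c 0 + c 1 * s + c 2 * (s ^ 2)⁻¹ + c 3 * (s ^ 3)⁻¹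

/-- The derivative of `profile c`. -/
noncomputable def profileD (c : Fin 4 → ℝ) (s : ℝ) : ℝ :=
  c 1 - 2 * c 2 * (s ^ 3)⁻¹ - 3 * c 3 * (s ^ 4)⁻¹

theorem hasDerivAt_inv_pow (n : ℕ) {s : ℝ} (hs : 0 < s) :
    HasDerivAt (fun s : ℝ => (s ^ (n + 1))⁻¹) (-(n + 1) * (s ^ (n + 2))⁻¹) s := by
  refine ((hasDerivAt_pow (n + 1) s).fun_inv (by positivity)).congr_deriv ?_
  have := hs.ne'
  rw [Nat.add_sub_cancel]
  push_cast
  field_simp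
  ring

theorem profile_hasDerivAt (c : Fin 4 → ℝ) {s : ℝ} (hs : 0 < s) :
    HasDerivAt (profile c) (profileD c s) s := by
  unfold profile profileD
  refine (((((hasDerivAt_id s).const_mul (c 1)).const_add (c 0)).add
    ((hasDerivAt_inv_pow 1 hs).const_mul (c 2))).add
    ((hasDerivAt_inv_pow 2 hs).const_mul (c 3))).congr_deriv ?_
  push_cast
  ring

theorem profileD_hasDerivAt (c : Fin 4 → ℝ) {s : ℝ} (hs : 0 < s) :
    HasDerivAt (profileD c) (6 * c 2 * (s ^ 4)⁻¹ + 12 * c 3 * (s ^ 5)⁻¹) s := by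
  unfold profileD
  refine ((((hasDerivAt_inv_pow 2 hs).const_mul (2 * c 2)).const_sub (c 1)).sub
    ((hasDerivAt_inv_pow 3 hs).const_mul (3 * c 3))).congr_deriv ?_
  push_cast
  ring

theorem hasLap_profile (B : Fin 4 → Fin 4 → ℝ) (hB : ∑ k, B k k = 0) (c : Fin 4 → ℝ) :
    HasLap (fun x => quad B x * profile c (‖x‖ ^ 2))
      (fun x => quad B x * (4 * ‖x‖ ^ 2 *
        (6 * c 2 * ((‖x‖ ^ 2) ^ 4)⁻¹ + 12 * c 3 * ((‖x‖ ^ 2) ^ 5)⁻¹)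
        + 16 * profileD c (‖x‖ ^ 2))) :=
  HasLap.quad B hB (f' := profileD c)
    (f'' := fun s => 6 * c 2 * (s ^ 4)⁻¹ + 12 * c 3 * (s ^ 5)⁻¹)
    (fun _ hs => profile_hasDerivAt c hs) (fun _ hs => profileD_hasDerivAt c hs)

/-- The Laplacian maps the profile with coefficients `(c₀, c₁, c₂, c₃)` to the one with
coefficients `(16 c₁, 0, 0, -8 c₂)`, and so its square to zero. -/
theorem lap_lap_quad (B C : Fin 4 → Fin 4 → ℝ) (hB : ∑ k, B k k = 0) (hC : ∑ k, C k k = 0)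
    (d : ℝ) (c e : Fin 4 → ℝ) {x : EuclideanSpace ℝ (Fin 4)} (hx : x ≠ 0) :
    lap (lap (fun y => d + quad B y * profile c (‖y‖ ^ 2) + quad C y * profile e (‖y‖ ^ 2))) x
      = 0 := by
  have h1 := ((HasLap.const d).add (hasLap_profile B hB c)).add (hasLap_profile C hC e)
  have h2 := (hasLap_profile B hB ![16 * c 1, 0, 0, -8 * c 2]).add
    (hasLap_profile C hC ![16 * e 1, 0, 0, -8 * e 2])
  rw [lap_congr (v := fun y => quad B y * profile ![16 * c 1, 0, 0, -8 * c 2] (‖y‖ ^ 2)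
    + quad C y * profile ![16 * e 1, 0, 0, -8 * e 2] (‖y‖ ^ 2)) ?_ hx, (h2 x hx).2.2]
  · have : ‖x‖ ≠ 0 := norm_ne_zero_iff.2 hx
    simp [profileD]
    field_simp
    ring
  · intro y hy
    have : ‖y‖ ≠ 0 := norm_ne_zero_iff.2 hy
    rw [(h1 y hy).2.2]
    simp [profile, profileD]
    field_simp
    ring

/-! ### Hermite interpolation -/

/-- Hermite interpolation at `1` and `t` by biharmonic profiles. -/
theorem exists_profile {t : ℝ} (h0 : 0 < t) (h1 : t < 1) (A B C D : ℝ) :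
    ∃ c : Fin 4 → ℝ, profile c 1 = A ∧ profileD c 1 = B ∧ profile c t = C ∧ profileD c t = D := by
  have hh : t - 1 ≠ 0 := by linarith
  have ht := h0.ne'
  have hq : 1 + 4 * t + t ^ 2 ≠ 0 := by positivity
  -- Interpolation data for the polynomial `s³ f(s)`, with its Newton coefficients `E`, `F`.
  obtain ⟨B', hB'⟩ : ∃ B', B' = 3 * A + B := ⟨_, rfl⟩
  obtain ⟨C', hC'⟩ : ∃ C', C' = t ^ 3 * C := ⟨_, rfl⟩
  obtain ⟨D', hD'⟩ : ∃ D', D' = 3 * t ^ 2 * C + t ^ 3 * D := ⟨_, rfl⟩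
  obtain ⟨E, hE⟩ : ∃ E, C' = A + B' * (t - 1) + E * (t - 1) ^ 2 :=
    ⟨(C' - A - B' * (t - 1)) / (t - 1) ^ 2, by field_simp; ring⟩
  obtain ⟨F, hF⟩ : ∃ F, D' = B' + 2 * (t - 1) * E + F * (t - 1) ^ 2 :=
    ⟨(D' - B' - 2 * (t - 1) * E) / (t - 1) ^ 2, by field_simp; ring⟩
  -- `G` makes the `s²`-coefficient vanish.
  obtain ⟨G, hG⟩ : ∃ G, E - F * (t + 2) + G * (1 + 4 * t + t ^ 2) = 0 :=
    ⟨-(E - F * (t + 2)) / (1 + 4 * t + t ^ 2), by field_simp; ring⟩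
  refine ⟨![F - G * (2 * t + 2), G, B' - 2 * E + F * (1 + 2 * t) - G * (2 * t ^ 2 + 2 * t),
    A - B' + E - F * t + G * t ^ 2], ?_, ?_, ?_, ?_⟩
  · simp [profile]
    linear_combination -hG
  · simp [profileD]
    linear_combination hG + hB'
  · have : C = C' / t ^ 3 := by rw [hC']; field_simp
    rw [this]
    simp [profile]
    field_simp
    linear_combination -hE - t ^ 2 * hG
  · have : D = (D' - 3 * C' / t) / t ^ 3 := by rw [hD', hC']; field_simp; ring
    rw [this]
    simp [profileD]
    field_simp
    linear_combination -t * hF + 3 * hE + t ^ 2 * hG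

/-! ### Smoothness and symmetry -/

theorem contDiff_quad (B : Fin 4 → Fin 4 → ℝ) : ContDiff ℝ (⊤ : ℕ∞) (quad B) := by
  unfold quad
  fun_prop

theorem contDiffOn_profile (c : Fin 4 → ℝ) :
    ContDiffOn ℝ (⊤ : ℕ∞) (fun x : EuclideanSpace ℝ (Fin 4) => profile c (‖x‖ ^ 2))
      {(0 : EuclideanSpace ℝ (Fin 4))}ᶜ := by
  have hn : ContDiffOn ℝ (⊤ : ℕ∞) (fun x : EuclideanSpace ℝ (Fin 4) => ‖x‖ ^ 2)
      {(0 : EuclideanSpace ℝ (Fin 4))}ᶜ := (contDiff_norm_sq ℝ).contDiffOn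
  have hi : ∀ n : ℕ, ContDiffOn ℝ (⊤ : ℕ∞)
      (fun x : EuclideanSpace ℝ (Fin 4) => ((‖x‖ ^ 2) ^ n)⁻¹)
      {(0 : EuclideanSpace ℝ (Fin 4))}ᶜ := fun n =>
    (hn.pow n).inv fun x hx => pow_ne_zero _ (pow_ne_zero _ (norm_ne_zero_iff.2 hx))
  unfold profile
  exact ((contDiffOn_const.add (contDiffOn_const.mul hn)).add
    (contDiffOn_const.mul (hi 2))).add (contDiffOn_const.mul (hi 3))

theorem IsWeyl.quad_symm {W : Fin 4 → Fin 4 → Fin 4 → Fin 4 → ℝ} (hW : IsWeyl W) (i j : Fin 4)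
    (x : EuclideanSpace ℝ (Fin 4)) :
    quad (fun k l => W k i j l) x = quad (fun k l => W k j i l) x := by
  obtain ⟨h1, h2, h3, -⟩ := hW
  unfold quad
  rw [Finset.sum_comm]
  refine Finset.sum_congr rfl fun k _ => Finset.sum_congr rfl fun l _ => ?_
  have : W l i j k = W k j i l := by
    rw [h3, h1, h2, neg_neg]
  dsimp only
  rw [this]
  ring



/-! ### The biharmonic interpolation -/

/-- Existence of the biharmonic interpolation: a family of smooth symmetric
functions `w_{ij}` on `ℝ⁴ \ {0}`, biharmonic in the annulus `{γ < |x| < 1}`, matching the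
prescribed metric boundary values and radial derivatives on `{|x| = γ}` and `{|x| = 1}`. -/
theorem stmt_13 (γ : ℝ) (hγ : γ ∈ Set.Ioo (0 : ℝ) 1) (a b : ℝ)
    (WM WZ : Fin 4 → Fin 4 → Fin 4 → Fin 4 → ℝ) (hWM : IsWeyl WM) (hWZ : IsWeyl WZ) :
    ∃ w : Fin 4 → Fin 4 → EuclideanSpace ℝ (Fin 4) → ℝ,
      (∀ i j, ContDiffOn ℝ (⊤ : ℕ∞) (w i j) {(0 : EuclideanSpace ℝ (Fin 4))}ᶜ) ∧
      (∀ i j x, w i j x = w j i x) ∧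
      (∀ (i j : Fin 4) (x : EuclideanSpace ℝ (Fin 4)), γ < ‖x‖ → ‖x‖ < 1 →
        lap (lap (w i j)) x = 0) ∧
      (∀ (i j : Fin 4) (x : EuclideanSpace ℝ (Fin 4)), ‖x‖ = γ →
        w i j x = (if i = j then (1 : ℝ) else 0)
            - (a ^ 2 / 3) * (∑ k, ∑ l, WM k i j l * x k * x l) / ‖x‖ ^ 4 ∧
        radDeriv (w i j) x
          = (2 * a ^ 2 / 3) * (∑ k, ∑ l, WM k i j l * x k * x l) / ‖x‖ ^ 5) ∧
      (∀ (i j : Fin 4) (x : EuclideanSpace ℝ (Fin 4)), ‖x‖ = 1 →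
        w i j x = (if i = j then (1 : ℝ) else 0)
            - (b ^ 2 / 3) * ∑ k, ∑ l, WZ k i j l * x k * x l ∧
        radDeriv (w i j) x
          = -(2 * b ^ 2 / 3) * (∑ k, ∑ l, WZ k i j l * x k * x l) / ‖x‖) := by
  obtain ⟨h0, h1⟩ := hγ
  have hγ0 := h0.ne'
  have ht1 : γ ^ 2 < 1 := by nlinarith
  obtain ⟨c, hc1, hc2, hc3, hc4⟩ := exists_profile (t := γ ^ 2) (by positivity) ht1
    0 0 (-(a ^ 2 / 3) / γ ^ 4) (2 * a ^ 2 / 3 / γ ^ 6)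
  obtain ⟨e, he1, he2, he3, he4⟩ := exists_profile (t := γ ^ 2) (by positivity) ht1
    (-(b ^ 2 / 3)) 0 0 0
  refine ⟨fun i j y => (if i = j then (1 : ℝ) else 0)
    + quad (fun k l => WM k i j l) y * profile c (‖y‖ ^ 2)
    + quad (fun k l => WZ k i j l) y * profile e (‖y‖ ^ 2), ?_, ?_, ?_, ?_, ?_⟩
  · intro i j
    exact (contDiffOn_const.add ((contDiff_quad _).contDiffOn.mul (contDiffOn_profile c))).add
      ((contDiff_quad _).contDiffOn.mul (contDiffOn_profile e))
  · intro i j x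
    simp only [hWM.quad_symm i j x, hWZ.quad_symm i j x, eq_comm (a := i) (b := j)]
  · intro i j x hx _
    exact lap_lap_quad _ _ (hWM.2.2.2 i j) (hWZ.2.2.2 i j) _ c e
      (norm_pos_iff.1 (h0.trans hx))
  · intro i j x hx
    have hs : 0 < ‖x‖ ^ 2 := by rw [hx]; positivity
    rw [radDeriv_eq _ _ _ (profile_hasDerivAt c hs) (profile_hasDerivAt e hs)]
    simp only [hx, hc3, hc4, he3, he4]
    change _ = _ - a ^ 2 / 3 * quad (fun k l => WM k i j l) x / γ ^ 4 ∧
      _ = 2 * a ^ 2 / 3 * quad (fun k l => WM k i j l) x / γ ^ 5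
    constructor
    · ring
    · field_simp
      ring
  · intro i j x hx
    have hs : 0 < ‖x‖ ^ 2 := by rw [hx]; positivity
    rw [radDeriv_eq _ _ _ (profile_hasDerivAt c hs) (profile_hasDerivAt e hs)]
    simp only [hx, one_pow, hc1, hc2, he1, he2]
    change _ = _ - b ^ 2 / 3 * quad (fun k l => WZ k i j l) x ∧
      _ = -(2 * b ^ 2 / 3) * quad (fun k l => WZ k i j l) x / 1
    constructor
    · ring
    · ring
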